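/- arXiv:2411.10348 — 4 statements merged into one kernel-verified Lean document; each statement's English description precedes it below -/
import Mathlib

section
/- Let Ω, Ω' ⊆ ℝⁿ be open sets with Ω connected. Let f: Ω → ℝⁿ and h: Ω × ℝⁿ → ℝⁿ be smooth (C^∞) maps, and set F(x,t) = (f(x), h(x,t)). Assume: (i) f(Ω) ⊆ Ω'; (ii) for all (x,t) ∈ Ω × ℝⁿ and all m ∈ ℤⁿ, h(x, t+m) − h(x,t) ∈ ℤⁿ, so that F descends to a map F̄: Ω × (ℝⁿ/ℤⁿ) → Ω' × (ℝⁿ/ℤⁿ); (iii) F̄ is a bijection onto Ω' × (ℝⁿ/ℤⁿ); (iv) for every (x,t), the total derivative DF(x,t): ℝⁿ × ℝⁿ → ℝⁿ × ℝⁿ preserves ω₀, i.e., ω₀(DF(x,t)w₁, DF(x,t)w₂) = ω₀(w₁, w₂) for all w₁, w₂ ∈ ℝⁿ × ℝⁿ. Then there exist a matrix A ∈ GL_n(ℤ), a vector b ∈ ℝⁿ, and a smooth map g: Ω → ℝⁿ such that f(x) = A x + b and h(x,t) = A^{-T} t + g(x) for all (x,t) ∈ Ω × ℝⁿ. -/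
open Set

/-- The integer lattice `ℤⁿ` inside `ℝⁿ`. -/
def ZLat (n : ℕ) : Set (Fin n → ℝ) := {x | ∀ i, ∃ m : ℤ, x i = (m : ℝ)}

/-- A real matrix all of whose entries are integers. -/
def IsIntMat {n : ℕ} (A : Matrix (Fin n) (Fin n) ℝ) : Prop :=
  ∀ i j, ∃ m : ℤ, A i j = (m : ℝ)

/-- The standard inner product on `ℝⁿ`. -/
def dotR {n : ℕ} (u v : Fin n → ℝ) : ℝ := ∑ i, u i * v i

/-- The standard symplectic bilinear form on `ℝⁿ × ℝⁿ`:
`ω₀((u₁,v₁),(u₂,v₂)) = ⟨u₁,v₂⟩ − ⟨u₂,v₁⟩`. -/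
def omega0 {n : ℕ} (w₁ w₂ : (Fin n → ℝ) × (Fin n → ℝ)) : ℝ :=
  dotR w₁.1 w₂.2 - dotR w₂.1 w₁.2

/-!
Write `F (x, t) = (f x, h (x, t))`. Pairing a base vector with a fiber vector, symplecticity of
`DF` says `Df(x)ᵀ * ∂ₜh(x, t) = 1`. Hence `∂ₜh(x, t)` does not depend on `t`, and `h (x, ·)` is
affine with linear part `B x = Df(x)⁻ᵀ`. Since `h (x, ·)` descends to the torus, `B x` maps `ℤⁿ`
into `ℤⁿ`, so `x ↦ B x *ᵥ m` is, for each `m ∈ ℤⁿ`, a continuous function with values in a discrete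
set and therefore constant on the connected set `Ω`. Thus `Df` is constant and `f` is affine.
Finally, injectivity of `h (x, ·)` on the torus makes `(B x)⁻¹` preserve `ℤⁿ` as well.
-/

open Matrix

section FiberedMap

variable {𝕜 E E' G G' : Type*} [NontriviallyNormedField 𝕜]
  [NormedAddCommGroup E] [NormedSpace 𝕜 E] [NormedAddCommGroup E'] [NormedSpace 𝕜 E']
  [NormedAddCommGroup G] [NormedSpace 𝕜 G] [NormedAddCommGroup G'] [NormedSpace 𝕜 G']

theorem fderiv_fiberedMap_apply {f : E → E'} {h : E × G → G'} {x : E} {t : G}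
    (hf : DifferentiableAt 𝕜 f x) (hh : DifferentiableAt 𝕜 h (x, t)) (w : E × G) :
    fderiv 𝕜 (fun p : E × G => (f p.1, h p)) (x, t) w =
      (fderiv 𝕜 f x w.1, fderiv 𝕜 h (x, t) w) := by
  have hbase : HasFDerivAt (fun p : E × G => f p.1)
      ((fderiv 𝕜 f x).comp (ContinuousLinearMap.fst 𝕜 E G)) (x, t) :=
    HasFDerivAt.comp (x, t) (g := f) hf.hasFDerivAt hasFDerivAt_fst
  rw [(hbase.prodMk hh.hasFDerivAt).fderiv]
  rfl

theorem fderiv_fiber_apply {h : E × G → G'} {x : E} {t : G}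
    (hh : DifferentiableAt 𝕜 h (x, t)) (v : G) :
    fderiv 𝕜 (fun s => h (x, s)) t v = fderiv 𝕜 h (x, t) (0, v) := by
  have hfiber : HasFDerivAt (fun s => h (x, s))
      ((fderiv 𝕜 h (x, t)).comp (ContinuousLinearMap.inr 𝕜 E G)) t :=
    HasFDerivAt.comp t (g := h) hh.hasFDerivAt (hasFDerivAt_prodMk_right x t)
  rw [hfiber.fderiv]
  rfl

end FiberedMap

section Jacobian

variable {ι κ : Type*} [Fintype κ] [DecidableEq κ]

/-- The Jacobian matrix of `φ : ℝ^κ → ℝ^ι` at `x`, i.e. the matrix of `fderiv ℝ φ x` in the standard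
bases; it is `0` where `φ` is not differentiable. -/
noncomputable def jacobian (φ : (κ → ℝ) → ι → ℝ) (x : κ → ℝ) : Matrix ι κ ℝ :=
  LinearMap.toMatrix' (fderiv ℝ φ x : (κ → ℝ) →ₗ[ℝ] ι → ℝ)

theorem jacobian_mulVec (φ : (κ → ℝ) → ι → ℝ) (x v : κ → ℝ) :
    jacobian φ x *ᵥ v = fderiv ℝ φ x v := by
  simp [jacobian]

theorem exists_eq_mulVec_add_of_jacobian_eq [Finite ι] {φ : (κ → ℝ) → ι → ℝ} {s : Set (κ → ℝ)}
    {A : Matrix ι κ ℝ} (hs : IsOpen s) (hs' : IsPreconnected s) (hφ : DifferentiableOn ℝ φ s)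
    (hA : ∀ x ∈ s, jacobian φ x = A) : ∃ b, ∀ x ∈ s, φ x = A *ᵥ x + b := by
  have := Fintype.ofFinite ι
  let L : (κ → ℝ) →L[ℝ] ι → ℝ := A.mulVecLin.toContinuousLinearMap
  have hfderiv : s.EqOn (fderiv ℝ φ) (fderiv ℝ L) := fun x hx => by
    ext1 v
    rw [L.fderiv, ← jacobian_mulVec, hA x hx]
    rfl
  exact hs.exists_eq_add_of_fderiv_eq hs' hφ L.differentiable.differentiableOn hfderiv

end Jacobian

theorem transpose_mul_eq_one_of_mulVec_dotProduct_mulVec {R ι κ : Type*} [NonAssocSemiring R]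
    [Fintype ι] [Fintype κ] [DecidableEq κ] {A B : Matrix ι κ R}
    (hAB : ∀ u v, (A *ᵥ u) ⬝ᵥ (B *ᵥ v) = u ⬝ᵥ v) : Aᵀ * B = 1 := by
  ext i j
  have hij := hAB (Pi.single i 1) (Pi.single j 1)
  rw [mulVec_single_one, mulVec_single_one, single_one_dotProduct, Pi.single_apply] at hij
  rw [one_apply]
  exact hij

section Symplectic

variable {n : ℕ}

/-- Preservation of the standard symplectic form `omega0` by a map of `ℝⁿ × ℝⁿ`, meant for the
derivative of a symplectic map at a point; linearity is not part of the condition. -/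
def IsSymplectic (L : (Fin n → ℝ) × (Fin n → ℝ) → (Fin n → ℝ) × (Fin n → ℝ)) : Prop :=
  ∀ w₁ w₂, omega0 (L w₁) (L w₂) = omega0 w₁ w₂

theorem omega0_mk_zero_right (u v w : Fin n → ℝ) : omega0 (u, w) (0, v) = u ⬝ᵥ v := by
  simp [omega0, dotR, dotProduct]

variable {f : (Fin n → ℝ) → Fin n → ℝ} {h : (Fin n → ℝ) × (Fin n → ℝ) → Fin n → ℝ}
  {x : Fin n → ℝ}

theorem transpose_jacobian_mul_jacobian_fiber {t : Fin n → ℝ}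
    (hf : DifferentiableAt ℝ f x) (hh : DifferentiableAt ℝ h (x, t))
    (hsymp : IsSymplectic (fderiv ℝ (fun p => (f p.1, h p)) (x, t))) :
    (jacobian f x)ᵀ * jacobian (fun s => h (x, s)) t = 1 := by
  refine transpose_mul_eq_one_of_mulVec_dotProduct_mulVec fun u v => ?_
  have huv := hsymp (u, 0) (0, v)
  rw [fderiv_fiberedMap_apply hf hh, fderiv_fiberedMap_apply hf hh, map_zero, omega0_mk_zero_right,
    omega0_mk_zero_right] at huv
  rwa [jacobian_mulVec, jacobian_mulVec, fderiv_fiber_apply hh]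

theorem fiber_sub_fiber_of_isSymplectic (hf : DifferentiableAt ℝ f x)
    (hh : ∀ t, DifferentiableAt ℝ h (x, t))
    (hsymp : ∀ t, IsSymplectic (fderiv ℝ (fun p => (f p.1, h p)) (x, t))) (t s : Fin n → ℝ) :
    h (x, t) - h (x, s) = (jacobian f x)⁻¹ᵀ *ᵥ (t - s) := by
  have hjacobian : ∀ s ∈ univ, jacobian (fun s => h (x, s)) s = (jacobian f x)⁻¹ᵀ := fun s _ => by
    rw [transpose_nonsing_inv]
    exact (inv_eq_right_inv (transpose_jacobian_mul_jacobian_fiber hf (hh s) (hsymp s))).symm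
  have hdiff : Differentiable ℝ fun s => h (x, s) := fun s => (hh s).comp s (by fun_prop)
  obtain ⟨b, hb⟩ := exists_eq_mulVec_add_of_jacobian_eq isOpen_univ isPreconnected_univ
    hdiff.differentiableOn hjacobian
  rw [hb t (mem_univ t), hb s (mem_univ s), add_sub_add_right_eq_sub, mulVec_sub]

theorem isUnit_det_jacobian_of_isSymplectic {t : Fin n → ℝ}
    (hf : DifferentiableAt ℝ f x) (hh : DifferentiableAt ℝ h (x, t))
    (hsymp : IsSymplectic (fderiv ℝ (fun p => (f p.1, h p)) (x, t))) :
    IsUnit (jacobian f x).det := by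
  rw [← det_transpose]
  exact isUnit_det_of_right_inverse (transpose_jacobian_mul_jacobian_fiber hf hh hsymp)

end Symplectic

section Lattice

variable {n : ℕ}

theorem single_one_mem_ZLat (j : Fin n) : Pi.single j (1 : ℝ) ∈ ZLat n := fun i =>
  ⟨(Pi.single j 1 : Fin n → ℤ) i, by simp [Pi.single_apply]⟩

theorem ZLat_eq_range : ZLat n = range (Pi.map fun _ : Fin n => ((↑) : ℤ → ℝ)) := by
  ext x
  simp only [ZLat, range_piMap, mem_ofPred_eq, mem_univ_pi, mem_range, eq_comm]

theorem isDiscrete_ZLat : IsDiscrete (ZLat n) := by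
  rw [ZLat_eq_range, ← image_univ]
  exact IsDiscrete.univ.image
    (Topology.IsInducing.piMap fun _ => Int.isClosedEmbedding_coe_real.isInducing)

theorem isIntMat_of_mapsTo_ZLat {B : Matrix (Fin n) (Fin n) ℝ}
    (hB : MapsTo B.mulVec (ZLat n) (ZLat n)) : IsIntMat B := fun i j => by
  simpa using hB (single_one_mem_ZLat j) i

theorem IsIntMat.transpose {A : Matrix (Fin n) (Fin n) ℝ} (hA : IsIntMat A) : IsIntMat Aᵀ :=
  fun i j => hA j i

theorem isIntMat_of_mem_ZLat_of_inv_transpose_mulVec_mem {A : Matrix (Fin n) (Fin n) ℝ}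
    (hdet : IsUnit A.det) (hA : ∀ t, A⁻¹ᵀ *ᵥ t ∈ ZLat n → t ∈ ZLat n) : IsIntMat A := by
  have hmul : A⁻¹ᵀ * Aᵀ = 1 := by rw [← transpose_mul, mul_nonsing_inv A hdet, transpose_one]
  have htranspose : IsIntMat Aᵀ := isIntMat_of_mapsTo_ZLat fun m hm =>
    hA _ (by rwa [mulVec_mulVec, hmul, one_mulVec])
  exact htranspose.transpose

theorem eq_of_continuousOn_mulVec_of_mapsTo_ZLat {X : Type*} [TopologicalSpace X] {s : Set X}
    {B : X → Matrix (Fin n) (Fin n) ℝ} (hs : IsPreconnected s)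
    (hcont : ∀ m ∈ ZLat n, ContinuousOn (fun x => B x *ᵥ m) s)
    (hB : ∀ x ∈ s, MapsTo (B x).mulVec (ZLat n) (ZLat n)) {x y : X} (hx : x ∈ s) (hy : y ∈ s) :
    B x = B y :=
  ext_of_mulVec_single fun j => hs.constant_of_mapsTo isDiscrete_ZLat
    (hcont _ (single_one_mem_ZLat j)) (fun z hz => hB z hz (single_one_mem_ZLat j)) hx hy

end Lattice

theorem arnold_liouville_isomorphism_general {n : ℕ} {Ω : Set (Fin n → ℝ)} {k : WithTop ℕ∞}
    {f : (Fin n → ℝ) → Fin n → ℝ} {h : (Fin n → ℝ) × (Fin n → ℝ) → Fin n → ℝ}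
    (hΩ : IsOpen Ω) (hΩconn : IsConnected Ω) (hk : k ≠ 0)
    (hf : DifferentiableOn ℝ f Ω) (hh : ContDiffOn ℝ k h (Ω ×ˢ univ))
    (hper : ∀ x ∈ Ω, ∀ t, ∀ m ∈ ZLat n, h (x, t + m) - h (x, t) ∈ ZLat n)
    (hinj : ∀ x ∈ Ω, ∀ t₁ t₂, h (x, t₁) - h (x, t₂) ∈ ZLat n → t₁ - t₂ ∈ ZLat n)
    (hsymp : ∀ p ∈ Ω ×ˢ univ, IsSymplectic (fderiv ℝ (fun q => (f q.1, h q)) p)) :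
    ∃ (A : Matrix (Fin n) (Fin n) ℝ) (b : Fin n → ℝ) (g : (Fin n → ℝ) → Fin n → ℝ),
      IsIntMat A ∧ IsIntMat A⁻¹ ∧ IsUnit A.det ∧ ContDiffOn ℝ k g Ω ∧
      ∀ x ∈ Ω, f x = A *ᵥ x + b ∧ ∀ t, h (x, t) = A⁻¹ᵀ *ᵥ t + g x := by
  have hmem : ∀ x ∈ Ω, ∀ t : Fin n → ℝ, (x, t) ∈ Ω ×ˢ univ := fun x hx t => ⟨hx, mem_univ t⟩
  have hfx : ∀ x ∈ Ω, DifferentiableAt ℝ f x := fun x hx => hf.differentiableAt (hΩ.mem_nhds hx)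
  have hhx : ∀ x ∈ Ω, ∀ t, DifferentiableAt ℝ h (x, t) := fun x hx t =>
    (hh.differentiableOn hk).differentiableAt ((hΩ.prod isOpen_univ).mem_nhds (hmem x hx t))
  have hslice : ∀ t, ContDiffOn ℝ k (fun x => h (x, t)) Ω := fun t =>
    hh.comp (by fun_prop) fun x hx => hmem x hx t
  have hdet : ∀ x ∈ Ω, IsUnit (jacobian f x).det := fun x hx =>
    isUnit_det_jacobian_of_isSymplectic (hfx x hx) (hhx x hx 0) (hsymp _ (hmem x hx 0))
  have hfiber : ∀ x ∈ Ω, ∀ t s, h (x, t) - h (x, s) = (jacobian f x)⁻¹ᵀ *ᵥ (t - s) := fun x hx =>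
    fiber_sub_fiber_of_isSymplectic (hfx x hx) (hhx x hx) fun t => hsymp _ (hmem x hx t)
  have hmaps : ∀ x ∈ Ω, MapsTo (jacobian f x)⁻¹ᵀ.mulVec (ZLat n) (ZLat n) := fun x hx m hm => by
    simpa [hfiber x hx] using hper x hx 0 m hm
  have hcont : ∀ m ∈ ZLat n, ContinuousOn (fun x => (jacobian f x)⁻¹ᵀ *ᵥ m) Ω := fun m _ =>
    ((hslice m).continuousOn.sub (hslice 0).continuousOn).congr fun x hx => by
      simp [hfiber x hx]
  obtain ⟨x₀, hx₀⟩ := hΩconn.nonempty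
  have hconst : ∀ x ∈ Ω, jacobian f x = jacobian f x₀ := fun x hx =>
    inv_inj (transpose_injective (eq_of_continuousOn_mulVec_of_mapsTo_ZLat
      hΩconn.isPreconnected hcont hmaps hx hx₀)) (hdet x hx)
  obtain ⟨b, hb⟩ := exists_eq_mulVec_add_of_jacobian_eq hΩ hΩconn.isPreconnected hf hconst
  have hintA : IsIntMat (jacobian f x₀) :=
    isIntMat_of_mem_ZLat_of_inv_transpose_mulVec_mem (hdet x₀ hx₀) fun t ht => by
      simpa using hinj x₀ hx₀ t 0 (by simpa [hfiber x₀ hx₀] using ht)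
  have hintAinv : IsIntMat (jacobian f x₀)⁻¹ := (isIntMat_of_mapsTo_ZLat (hmaps x₀ hx₀)).transpose
  refine ⟨jacobian f x₀, b, fun x => h (x, 0), hintA, hintAinv, hdet x₀ hx₀, hslice 0,
    fun x hx => ⟨hb x hx, fun t => ?_⟩⟩
  rw [← hconst x hx, ← sub_eq_iff_eq_add, hfiber x hx, sub_zero]

/-- **Isomorphisms of Arnol'd–Liouville models.** Let `Ω` be open and
connected and `Ω'` open in `ℝⁿ`, and let `F(x,t) = (f x, h (x,t))` be smooth,
mapping `Ω × ℝⁿ` to `Ω' × ℝⁿ`, descending to a bijection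
`Ω × ℝⁿ/ℤⁿ → Ω' × ℝⁿ/ℤⁿ` and whose derivative preserves the standard
symplectic form everywhere. Then `f x = A x + b` and `h (x,t) = A⁻ᵀ t + g x`
for some `A ∈ GL_n(ℤ)`, `b ∈ ℝⁿ` and a smooth map `g : Ω → ℝⁿ`. -/
theorem arnold_liouville_isomorphism
    {n : ℕ} {Ω Ω' : Set (Fin n → ℝ)}
    (hΩ : IsOpen Ω) (hΩconn : IsConnected Ω) (hΩ' : IsOpen Ω')
    (f : (Fin n → ℝ) → (Fin n → ℝ))
    (h : (Fin n → ℝ) × (Fin n → ℝ) → (Fin n → ℝ))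
    (F : (Fin n → ℝ) × (Fin n → ℝ) → (Fin n → ℝ) × (Fin n → ℝ))
    (hF : ∀ p, F p = (f p.1, h p))
    (hfsmooth : ContDiffOn ℝ (⊤ : ℕ∞) f Ω)
    (hhsmooth : ContDiffOn ℝ (⊤ : ℕ∞) h (Ω ×ˢ (Set.univ : Set (Fin n → ℝ))))
    -- (i) `f(Ω) ⊆ Ω'`
    (hmaps : Set.MapsTo f Ω Ω')
    -- (ii) `h(x, t+m) − h(x,t) ∈ ℤⁿ` for all `m ∈ ℤⁿ`, so `F` descends to a map
    -- `F̄ : Ω × (ℝⁿ/ℤⁿ) → Ω' × (ℝⁿ/ℤⁿ)`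
    (hper : ∀ x ∈ Ω, ∀ t : Fin n → ℝ, ∀ m ∈ ZLat n, h (x, t + m) - h (x, t) ∈ ZLat n)
    -- (iii) `F̄` is a bijection onto `Ω' × (ℝⁿ/ℤⁿ)`: surjectivity ...
    (hsurj : ∀ x' ∈ Ω', ∀ t' : Fin n → ℝ,
      ∃ x ∈ Ω, ∃ t : Fin n → ℝ, f x = x' ∧ h (x, t) - t' ∈ ZLat n)
    -- ... and injectivity modulo `ℤⁿ`
    (hinj : ∀ x₁ ∈ Ω, ∀ x₂ ∈ Ω, ∀ t₁ t₂ : Fin n → ℝ,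
      f x₁ = f x₂ → h (x₁, t₁) - h (x₂, t₂) ∈ ZLat n →
      x₁ = x₂ ∧ t₁ - t₂ ∈ ZLat n)
    -- (iv) the total derivative of `F` preserves the standard symplectic form
    (hsymp : ∀ p ∈ Ω ×ˢ (Set.univ : Set (Fin n → ℝ)),
      ∀ w₁ w₂ : (Fin n → ℝ) × (Fin n → ℝ),
        omega0 (fderiv ℝ F p w₁) (fderiv ℝ F p w₂) = omega0 w₁ w₂) :
    ∃ A : Matrix (Fin n) (Fin n) ℝ, ∃ b : Fin n → ℝ,
      ∃ g : (Fin n → ℝ) → (Fin n → ℝ),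
        IsIntMat A ∧ IsIntMat A⁻¹ ∧ IsUnit A.det ∧ ContDiffOn ℝ (⊤ : ℕ∞) g Ω ∧
        ∀ x ∈ Ω, f x = A.mulVec x + b ∧
          ∀ t : Fin n → ℝ, h (x, t) = (A⁻¹).transpose.mulVec t + g x := by
  obtain rfl : F = fun p => (f p.1, h p) := funext hF
  exact arnold_liouville_isomorphism_general hΩ hΩconn (by simp)
    (hfsmooth.differentiableOn (by simp)) hhsmooth hper
    (fun x hx t₁ t₂ ht => (hinj x hx x hx t₁ t₂ rfl ht).2) hsymp
end

section
/- Let Ω ⊆ ℝⁿ be open and nonempty, let A ∈ GL_n(ℤ), b ∈ ℝⁿ, and let g: Ω → ℝⁿ be a smooth map. Define F: Ω × ℝⁿ → ℝⁿ × ℝⁿ by F(x,t) = (A x + b, A^{-T} t + g(x)). Fix x ∈ Ω and suppose that for every k ∈ {1, …, n} the line integral of the 1-form Σ_j x_j dt_j along the curve s ↦ F(x, s e_k), s ∈ [0,1], differs from x_k by an integer; that is, writing F(x, s e_k) = (γ₁(s), γ₂(s)) with γ₁, γ₂: [0,1] → ℝⁿ, suppose ∫₀¹ ⟨γ₁(s),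 γ₂′(s)⟩ ds − x_k ∈ ℤ for each k. Then b ∈ ℤⁿ. -/
open Set

/-- The `k`-th standard basis vector of `ℝⁿ`. -/
def eVec {n : ℕ} (k : Fin n) : Fin n → ℝ := fun i => if i = k then 1 else 0

/-!
The second component of the curve moves with constant velocity `A⁻ᵀ e_k` while the first one stays
at `A x + b`, so the line integral is `⟨A x + b, A⁻ᵀ e_k⟩ = (A⁻¹ (A x + b))_k = x_k + (A⁻¹ b)_k`.
The hypothesis therefore says that `A⁻¹ b` is an integer vector, and so is `b = A (A⁻¹ b)`.
-/

open Matrix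

section LineIntegral

variable {m n : Type*} [Fintype n]

theorem deriv_mulVec_smul_add_const [Finite m] {𝕜 : Type*} [NontriviallyNormedField 𝕜]
    (M : Matrix m n 𝕜) (v : n → 𝕜) (c : m → 𝕜) (s : 𝕜) :
    deriv (fun t : 𝕜 => M *ᵥ (t • v) + c) s = M *ᵥ v := by
  cases nonempty_fintype m
  have hasDerivAt_line : HasDerivAt (fun t : 𝕜 => t • M *ᵥ v + c) ((1 : 𝕜) • M *ᵥ v) s :=
    ((hasDerivAt_id s).smul_const _).add_const _
  simpa only [mulVec_smul, one_smul] using hasDerivAt_line.deriv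

theorem integral_dotProduct_deriv_mulVec_smul_add_const [Fintype m]
    (p : m → ℝ) (M : Matrix m n ℝ) (v : n → ℝ) (c : m → ℝ) (a b : ℝ) :
    ∫ s in a..b, p ⬝ᵥ deriv (fun t : ℝ => M *ᵥ (t • v) + c) s = (b - a) * p ⬝ᵥ M *ᵥ v := by
  simp only [deriv_mulVec_smul_add_const, intervalIntegral.integral_const, smul_eq_mul]

end LineIntegral

theorem dotProduct_transpose_mulVec_single_one {m n R : Type*} [Fintype m] [Fintype n]
    [DecidableEq n] [CommSemiring R] (p : m → R) (M : Matrix n m R) (k : n) :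
    p ⬝ᵥ Mᵀ *ᵥ Pi.single k 1 = (M *ᵥ p) k := by
  rw [dotProduct_mulVec, vecMul_transpose, dotProduct_single_one]

theorem mulVec_apply_mem {m n R σ : Type*} [Fintype n] [NonUnitalNonAssocSemiring R]
    [SetLike σ R] [AddSubmonoidClass σ R] [MulMemClass σ R] {S : σ}
    {M : Matrix m n R} {v : n → R} (hM : ∀ i j, M i j ∈ S) (hv : ∀ j, v j ∈ S) (i : m) :
    (M *ᵥ v) i ∈ S :=
  sum_mem fun j _ => mul_mem (hM i j) (hv j)

section IntegerLattice

variable {n : ℕ}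

theorem mem_ZLat_iff_mem_range_intCast {v : Fin n → ℝ} :
    v ∈ ZLat n ↔ ∀ i, v i ∈ (Int.castRingHom ℝ).range :=
  forall_congr' fun _ => exists_congr fun _ => eq_comm

theorem isIntMat_iff_mem_range_intCast {A : Matrix (Fin n) (Fin n) ℝ} :
    IsIntMat A ↔ ∀ i j, A i j ∈ (Int.castRingHom ℝ).range :=
  forall₂_congr fun _ _ => exists_congr fun _ => eq_comm

theorem IsIntMat.mulVec_mem_ZLat {A : Matrix (Fin n) (Fin n) ℝ} (hA : IsIntMat A)
    {v : Fin n → ℝ} (hv : v ∈ ZLat n) : A *ᵥ v ∈ ZLat n :=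
  mem_ZLat_iff_mem_range_intCast.2 <|
    mulVec_apply_mem (isIntMat_iff_mem_range_intCast.1 hA) (mem_ZLat_iff_mem_range_intCast.1 hv)

end IntegerLattice

section Holonomy

variable {n : ℕ}

theorem dotR_eq_dotProduct (u v : Fin n → ℝ) : dotR u v = u ⬝ᵥ v := rfl

theorem eVec_eq_single (k : Fin n) : eVec k = Pi.single k 1 := by
  ext i
  simp only [eVec, Pi.single_apply]

theorem integral_dotR_deriv_transpose_mulVec_smul_eVec_add_const
    (p : Fin n → ℝ) (M : Matrix (Fin n) (Fin n) ℝ) (c : Fin n → ℝ) (k : Fin n) :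
    ∫ s in (0 : ℝ)..1, dotR p (deriv (fun s : ℝ => Mᵀ *ᵥ (s • eVec k) + c) s) = (M *ᵥ p) k := by
  simp only [dotR_eq_dotProduct, eVec_eq_single, integral_dotProduct_deriv_mulVec_smul_add_const,
    dotProduct_transpose_mulVec_single_one, sub_zero, one_mul]

theorem holonomy_sub_apply_eq_inv_mulVec_apply {A : Matrix (Fin n) (Fin n) ℝ}
    (hA : IsUnit A.det) (b c x : Fin n → ℝ) (k : Fin n) :
    (∫ s in (0 : ℝ)..1,
        dotR (A *ᵥ x + b) (deriv (fun s : ℝ => A⁻¹ᵀ *ᵥ (s • eVec k) + c) s)) - x k =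
      (A⁻¹ *ᵥ b) k := by
  rw [integral_dotR_deriv_transpose_mulVec_smul_eVec_add_const, mulVec_add, mulVec_mulVec,
    nonsing_inv_mul A hA, one_mulVec, Pi.add_apply, add_sub_cancel_left]

theorem holonomy_integrality_implies_b_integral_general {A : Matrix (Fin n) (Fin n) ℝ}
    (hAint : IsIntMat A) (hAunit : IsUnit A.det) (b c x : Fin n → ℝ)
    (hint : ∀ k : Fin n, ∃ m : ℤ,
      (∫ s in (0 : ℝ)..1,
        dotR (A *ᵥ x + b) (deriv (fun s : ℝ => A⁻¹ᵀ *ᵥ (s • eVec k) + c) s)) - x k = (m : ℝ)) :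
    b ∈ ZLat n := by
  have inv_mulVec_mem : A⁻¹ *ᵥ b ∈ ZLat n := fun k => by
    simpa only [holonomy_sub_apply_eq_inv_mulVec_apply hAunit] using hint k
  have mulVec_inv_mulVec : A *ᵥ (A⁻¹ *ᵥ b) = b := by
    rw [mulVec_mulVec, mul_nonsing_inv A hAunit, one_mulVec]
  exact mulVec_inv_mulVec ▸ hAint.mulVec_mem_ZLat inv_mulVec_mem

end Holonomy

/-- Consider the map `F(x,t) = (A x + b, A⁻ᵀ t + g x)` with `A ∈ GL_n(ℤ)`,
`b ∈ ℝⁿ`, and `g : Ω → ℝⁿ` smooth, on an open nonempty `Ω ⊆ ℝⁿ`.  Fix `x ∈ Ω`.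
If, for every `k`, the line integral of the 1-form `Σ_j x_j dt_j` along the
curve `s ↦ F(x, s e_k)`, `s ∈ [0,1]`, differs from `x_k` by an integer, then
`b ∈ ℤⁿ`. -/
theorem holonomy_integrality_implies_b_integral
    {n : ℕ} {Ω : Set (Fin n → ℝ)} (hΩ : IsOpen Ω) (hne : Ω.Nonempty)
    (A : Matrix (Fin n) (Fin n) ℝ)
    (hAint : IsIntMat A) (hAinvint : IsIntMat A⁻¹) (hAunit : IsUnit A.det)
    (b : Fin n → ℝ) (g : (Fin n → ℝ) → (Fin n → ℝ))
    (hg : ContDiffOn ℝ (⊤ : ℕ∞) g Ω)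
    (x : Fin n → ℝ) (hx : x ∈ Ω)
    -- Writing `F (x, s • e_k) = (γ₁ s, γ₂ s)`, i.e.
    -- `γ₁ s = A x + b` and `γ₂ s = A⁻ᵀ (s • e_k) + g x`, assume
    -- `∫₀¹ ⟨γ₁ s, γ₂′ s⟩ ds − x_k ∈ ℤ` for each `k`:
    (hint : ∀ k : Fin n, ∃ m : ℤ,
      (∫ s in (0:ℝ)..1,
          dotR (A.mulVec x + b)
            (deriv (fun s : ℝ =>
              (A⁻¹).transpose.mulVec (s • eVec k) + g x) s)) - x k = (m : ℝ)) :
    b ∈ ZLat n := by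
  exact holonomy_integrality_implies_b_integral_general hAint hAunit b (g x) x hint
end

section
/- Let Ω ⊆ ℝⁿ be open and convex, and let β: Ω × ℝⁿ → L(ℝⁿ × ℝⁿ, ℝ) be a smooth 1-form (a smooth map into the space of linear functionals on ℝⁿ × ℝⁿ) that is ℤⁿ-periodic in the second variable, i.e., β(x, t+m) = β(x, t) for all (x,t) and all m ∈ ℤⁿ, and closed, i.e., at every point p ∈ Ω × ℝⁿ the derivative Dβ(p), viewed as a bilinear map (ℝⁿ×ℝⁿ) × (ℝⁿ×ℝⁿ) → ℝ via (w₁, w₂) ↦ (Dβ(p)w₁)(w₂), is symmetric. Then there exist a vector c ∈ ℝⁿ and a smooth function φ: Ω × ℝⁿ → ℝ with φ(x, t+m) = φ(x,t) for all m ∈ ℤⁿ, such that β(x,t)(u,v) = ⟨c, v⟩ + Dφ(x,t)(u,v) for all (x,t) ∈ Ω × ℝⁿ and all (u,v) ∈ ℝⁿ × ℝⁿ. Moreover, c_k = ∫₀¹ β(x, t + s e_k)(0, e_k) ds for every (x,t) ∈ Ω × ℝⁿ and every k ∈ {1, …, n}. -/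
open Set

/-!
By the Poincaré lemma the closed form `β` has a primitive `f` on the convex set `Ω × ℝⁿ`. Since `β`
is invariant under a lattice translation, the increment of `f` under that translation has zero
derivative, hence is constant. Subtracting from `f` the linear functional of the second variable
which has the same increments along the lattice basis leaves a function `φ` invariant under the
basis translations, hence under the whole lattice. The fundamental theorem of calculus identifies
each constant increment with the integral of `β` over one period.
-/

open Module Function

section Primitives

variable {E G : Type*} [NormedAddCommGroup E] [NormedSpace ℝ E]
  [NormedAddCommGroup G] [NormedSpace ℝ G] {f : E → G} {f' : E → E →L[ℝ] G}

theorem exists_forall_map_add_sub_eq_of_periodic_fderiv {s : Set E} {w : E} (hs : IsOpen s)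
    (hs' : IsPreconnected s) (hf : ∀ x ∈ s, HasFDerivAt f (f' x) x)
    (hw : ∀ x ∈ s, x + w ∈ s) (hper : ∀ x ∈ s, f' (x + w) = f' x) :
    ∃ a, ∀ x ∈ s, f (x + w) - f x = a := by
  have hderiv : ∀ x ∈ s, HasFDerivAt (fun y ↦ f (y + w) - f y) (0 : E →L[ℝ] G) x := by
    intro x hx
    have htranslate : HasFDerivAt (fun y ↦ f (y + w)) (f' x) x :=
      (hasFDerivAt_comp_add_right w).2 (hper x hx ▸ hf (x + w) (hw x hx))
    simpa only [sub_self] using htranslate.fun_sub (hf x hx)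
  exact hs.exists_is_const_of_fderiv_eq_zero hs'
    (fun x hx ↦ (hderiv x hx).differentiableAt.differentiableWithinAt)
    fun x hx ↦ (hderiv x hx).fderiv

theorem contDiffOn_succ_of_hasFDerivAt {s : Set E} {r : ℕ∞} (hs : IsOpen s)
    (hf : ∀ x ∈ s, HasFDerivAt f (f' x) x) (hf' : ContDiffOn ℝ r f' s) :
    ContDiffOn ℝ (r + 1) f s :=
  (contDiffOn_succ_iff_hasFDerivWithinAt_of_uniqueDiffOn hs.uniqueDiffOn).2
    ⟨by simp, f', hf', fun x hx ↦ (hf x hx).hasFDerivWithinAt⟩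

theorem integral_fderiv_add_smul_eq_sub [CompleteSpace G] {s : Set E} {x w : E}
    (hf : ∀ y ∈ s, HasFDerivAt f (f' y) y) (hf' : ContinuousOn f' s)
    (hs : ∀ τ ∈ Icc (0 : ℝ) 1, x + τ • w ∈ s) :
    ∫ τ in (0 : ℝ)..1, f' (x + τ • w) w = f (x + w) - f x := by
  have hline (τ : ℝ) : HasDerivAt (fun τ : ℝ ↦ x + τ • w) w τ := by
    simpa only [id_eq, one_smul] using ((hasDerivAt_id τ).smul_const w).const_add x
  have hcont : ContinuousOn (fun τ : ℝ ↦ f' (x + τ • w) w) (Icc 0 1) :=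
    (hf'.comp (by fun_prop) hs).clm_apply continuousOn_const
  rw [← uIcc_of_le zero_le_one] at hs hcont
  have hftc := intervalIntegral.integral_eq_sub_of_hasDerivAt
    (fun τ hτ ↦ (hf _ (hs τ hτ)).comp_hasDerivAt τ (hline τ)) hcont.intervalIntegrable
  simpa using hftc

end Primitives

theorem periodic_of_mem_span_int {F α : Type*} [AddCommGroup F] {g : F → α} {S : Set F} {m : F}
    (hg : ∀ w ∈ S, Periodic g w) (hm : m ∈ Submodule.span ℤ S) : Periodic g m := by
  induction hm using Submodule.span_induction with
  | mem w hw => exact hg w hw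
  | zero => exact fun t ↦ by rw [add_zero]
  | add v w _ _ hv hw => exact hv.add_period hw
  | smul k w _ hw => exact hw.zsmul k

theorem closed_periodic_one_form_decomposition_general {E F G ι : Type*}
    [NormedAddCommGroup E] [NormedSpace ℝ E] [NormedAddCommGroup F] [NormedSpace ℝ F]
    [NormedAddCommGroup G] [NormedSpace ℝ G] [CompleteSpace G] [Finite ι]
    (b : Basis ι ℝ F) {Ω : Set E} (hΩ : IsOpen Ω) (hconv : Convex ℝ Ω)
    {r : ℕ∞} (hr : r ≠ 0) {β : E × F → E × F →L[ℝ] G} (hβ : ContDiffOn ℝ r β (Ω ×ˢ univ))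
    (hper : ∀ x ∈ Ω, ∀ i, Periodic (fun t ↦ β (x, t)) (b i))
    (hclosed : ∀ p ∈ Ω ×ˢ univ, ∀ w₁ w₂, fderiv ℝ β p w₁ w₂ = fderiv ℝ β p w₂ w₁) :
    ∃ (ℓ : F →L[ℝ] G) (φ : E × F → G),
      ContDiffOn ℝ (r + 1) φ (Ω ×ˢ univ) ∧
      (∀ x ∈ Ω, ∀ m ∈ Submodule.span ℤ (range b), Periodic (fun t ↦ φ (x, t)) m) ∧
      (∀ p ∈ Ω ×ˢ univ, β p = ℓ ∘L .snd ℝ E F + fderiv ℝ φ p) ∧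
      ∀ x ∈ Ω, ∀ t i, ℓ (b i) = ∫ s in (0 : ℝ)..1, β (x, t + s • b i) (0, b i) := by
  have hUo : IsOpen (Ω ×ˢ (univ : Set F)) := hΩ.prod isOpen_univ
  have hUc : Convex ℝ (Ω ×ˢ (univ : Set F)) := hconv.prod convex_univ
  obtain ⟨f, hf⟩ := hUc.exists_forall_hasFDerivAt_of_fderiv_symmetric hUo
    (hβ.differentiableOn (by simpa using hr)) hclosed
  have hincrement (i : ι) : ∃ a, ∀ p ∈ Ω ×ˢ univ, f (p + (0, b i)) - f p = a :=
    exists_forall_map_add_sub_eq_of_periodic_fderiv hUo hUc.isPreconnected hf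
      (fun p hp ↦ by simpa using hp) fun p hp ↦ by simpa [Prod.add_def] using hper p.1 hp.1 i p.2
  choose a ha using hincrement
  let ℓ : F →L[ℝ] G := b.constrL a
  have hℓ (i : ι) : ℓ (b i) = a i := b.constrL_basis a i
  have hφ : ∀ p ∈ Ω ×ˢ univ,
      HasFDerivAt (fun q ↦ f q - ℓ q.2) (β p - ℓ ∘L .snd ℝ E F) p :=
    fun p hp ↦ (hf p hp).sub (ℓ ∘L .snd ℝ E F).hasFDerivAt
  refine ⟨ℓ, fun q ↦ f q - ℓ q.2, ?_, ?_, ?_, ?_⟩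
  · exact contDiffOn_succ_of_hasFDerivAt hUo hφ (hβ.sub contDiffOn_const)
  · refine fun x hx m hm ↦ periodic_of_mem_span_int (forall_mem_range.2 fun i t ↦ ?_) hm
    have hstep : f (x, t + b i) - f (x, t) = ℓ (b i) := by
      simpa [hℓ] using ha i (x, t) ⟨hx, mem_univ t⟩
    simp only [map_add, ← hstep]
    abel
  · intro p hp
    rw [(hφ p hp).fderiv, add_sub_cancel]
  · intro x hx t i
    have hftc := integral_fderiv_add_smul_eq_sub (x := (x, t)) (w := (0, b i)) hf
      hβ.continuousOn fun τ _ ↦ by simpa using hx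
    rw [hℓ, ← ha i (x, t) ⟨hx, mem_univ t⟩, ← hftc]
    simp

section StandardLattice

variable {n : ℕ}

theorem basisFun_eq_eVec (k : Fin n) : Pi.basisFun ℝ (Fin n) k = eVec k := by
  ext i
  simp [eVec, Pi.single_apply]

theorem mem_ZLat_iff_mem_span {m : Fin n → ℝ} :
    m ∈ ZLat n ↔ m ∈ Submodule.span ℤ (range (Pi.basisFun ℝ (Fin n))) := by
  simp [ZLat, Basis.mem_span_iff_repr_mem, eq_comm]

theorem map_eq_dotR (ℓ : (Fin n → ℝ) →ₗ[ℝ] ℝ) (v : Fin n → ℝ) :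
    ℓ v = dotR (fun k ↦ ℓ (eVec k)) v := by
  have hsum : ∑ k, v k • eVec k = v := by
    simpa only [Pi.basisFun_repr, basisFun_eq_eVec] using (Pi.basisFun ℝ (Fin n)).sum_repr v
  calc ℓ v = ℓ (∑ k, v k • eVec k) := by rw [hsum]
    _ = dotR (fun k ↦ ℓ (eVec k)) v := by
      simp only [map_sum, map_smul, smul_eq_mul, dotR, mul_comm]

end StandardLattice

/-- A closed smooth 1-form `β` on `Ω × ℝⁿ` (with `Ω ⊆ ℝⁿ` open and convex)
that is `ℤⁿ`-periodic in the second variable can be written as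
`β = Σ_j c_j dt_j + dφ` for some constant vector `c ∈ ℝⁿ` and a smooth
`ℤⁿ`-periodic function `φ`; moreover `c_k` is recovered as the integral of
`β` along one period in the `t_k` direction. -/
theorem closed_periodic_one_form_decomposition
    {n : ℕ} {Ω : Set (Fin n → ℝ)} (hΩ : IsOpen Ω) (hconv : Convex ℝ Ω)
    (β : (Fin n → ℝ) × (Fin n → ℝ) → ((Fin n → ℝ) × (Fin n → ℝ)) →L[ℝ] ℝ)
    (hsmooth : ContDiffOn ℝ (⊤ : ℕ∞) β (Ω ×ˢ (Set.univ : Set (Fin n → ℝ))))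
    -- `ℤⁿ`-periodicity in the second variable
    (hper : ∀ x ∈ Ω, ∀ t : Fin n → ℝ, ∀ m ∈ ZLat n, β (x, t + m) = β (x, t))
    -- closedness: the derivative of `β` is symmetric at every point
    (hclosed : ∀ p ∈ Ω ×ˢ (Set.univ : Set (Fin n → ℝ)),
      ∀ w₁ w₂ : (Fin n → ℝ) × (Fin n → ℝ),
        (fderiv ℝ β p w₁) w₂ = (fderiv ℝ β p w₂) w₁) :
    ∃ c : Fin n → ℝ, ∃ φ : (Fin n → ℝ) × (Fin n → ℝ) → ℝ,
      ContDiffOn ℝ (⊤ : ℕ∞) φ (Ω ×ˢ (Set.univ : Set (Fin n → ℝ))) ∧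
      (∀ x ∈ Ω, ∀ t : Fin n → ℝ, ∀ m ∈ ZLat n, φ (x, t + m) = φ (x, t)) ∧
      (∀ p ∈ Ω ×ˢ (Set.univ : Set (Fin n → ℝ)), ∀ u v : Fin n → ℝ,
        β p (u, v) = dotR c v + fderiv ℝ φ p (u, v)) ∧
      (∀ x ∈ Ω, ∀ t : Fin n → ℝ, ∀ k : Fin n,
        c k = ∫ s in (0:ℝ)..1, β (x, t + s • eVec k) (0, eVec k)) := by
  have hgen (k : Fin n) : Pi.basisFun ℝ (Fin n) k ∈ ZLat n :=
    mem_ZLat_iff_mem_span.2 (Submodule.subset_span (mem_range_self k))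
  obtain ⟨ℓ, φ, hφ, hφper, hdecomp, hperiod⟩ := closed_periodic_one_form_decomposition_general
    (Pi.basisFun ℝ (Fin n)) hΩ hconv ENat.top_ne_zero hsmooth
    (fun x hx k t ↦ hper x hx t _ (hgen k)) hclosed
  refine ⟨fun k ↦ ℓ (eVec k), φ, hφ,
    fun x hx t m hm ↦ hφper x hx m (mem_ZLat_iff_mem_span.1 hm) t, fun p hp u v ↦ ?_,
    fun x hx t k ↦ by simpa only [basisFun_eq_eVec] using hperiod x hx t k⟩
  calc β p (u, v) = ℓ v + fderiv ℝ φ p (u, v) := DFunLike.congr_fun (hdecomp p hp) (u, v)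
    _ = dotR (fun k ↦ ℓ (eVec k)) v + fderiv ℝ φ p (u, v) :=
      congrArg (· + _) (map_eq_dotR ℓ.toLinearMap v)
end

section
/- Let E be a finite-dimensional real vector space, let ω be a nondegenerate alternating bilinear form on E, and let J: E → E be a linear map with J ∘ J = −id, ω(J u, J v) = ω(u, v) for all u, v ∈ E, and ω(u, J u) > 0 for all u ≠ 0 (a compatible complex structure). Let V ⊆ E be a Lagrangian subspace, i.e., V equals its ω-orthogonal complement {u ∈ E : ω(u, v) = 0 for all v ∈ V}. Then V and J(V) are complementary subspaces: E = V ⊕ J(V). -/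
/-!
The form `g u v = ω u (J v)` restricts to an anisotropic, hence perfect, pairing on `V`, so `E` is
the direct sum of `V` and `{u | ∀ v ∈ V, g u v = 0}`. The latter is the `ω`-orthogonal complement
of `J(V)`, which is the image under the isometry `J` of the `ω`-orthogonal complement of `V`,
that is, `J(V)`.
-/

open LinearMap (BilinForm)

theorem orthogonal_map_of_surjective_of_isometry {R M N : Type*} [CommSemiring R]
    [AddCommMonoid M] [Module R M] [AddCommMonoid N] [Module R N]
    {B : BilinForm R M} {C : BilinForm R N} {f : M →ₗ[R] N}
    (hf : Function.Surjective f) (hBC : ∀ u v, C (f u) (f v) = B u v) (W : Submodule R M) :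
    C.orthogonal (W.map f) = (B.orthogonal W).map f := by
  have hcomap : (C.orthogonal (W.map f)).comap f = B.orthogonal W := by
    ext u
    simp [hBC]
  rw [← hcomap, Submodule.map_comap_eq_of_surjective hf]

theorem isPerfPair_of_anisotropic {K V : Type*} [Field K] [AddCommGroup V] [Module K V]
    [FiniteDimensional K V] {B : BilinForm K V} (hB : ∀ v, B v v = 0 → v = 0) : B.IsPerfPair :=
  .of_injective
    ((injective_iff_map_eq_zero B).2 fun v hv ↦ hB v (LinearMap.congr_fun hv v))
    ((injective_iff_map_eq_zero B.flip).2 fun v hv ↦ hB v (LinearMap.congr_fun hv v))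

section CommRing

variable {R M : Type*} [CommRing R] [AddCommGroup M] [Module R M]

theorem isCompl_orthogonal_of_isPerfPair_restrict {B : BilinForm R M} {W : Submodule R M}
    (hW : (B.restrict W).IsPerfPair) : IsCompl W (B.orthogonal W) := by
  refine ⟨Submodule.disjoint_def.2 fun x hx hx_orth ↦ ?_,
    Submodule.codisjoint_iff_exists_add_eq.2 fun u ↦ ?_⟩
  · have hx_zero : (B.restrict W).flip ⟨x, hx⟩ = 0 := LinearMap.ext fun w ↦ hx_orth w w.2
    exact congrArg Subtype.val (hW.bijective_right.injective (hx_zero.trans (map_zero _).symm))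
  · obtain ⟨p, hp⟩ := hW.bijective_right.surjective (B.flip u ∘ₗ W.subtype)
    have hp_apply (w : M) (hw : w ∈ W) : B w p = B w u := LinearMap.congr_fun hp ⟨w, hw⟩
    refine ⟨p, u - p, p.2, fun w hw ↦ ?_, add_sub_cancel _ _⟩
    rw [map_sub, hp_apply w hw, sub_self]

theorem lagrangian_compl_J_image_general (ω : BilinForm R M) (J : M →ₗ[R] M)
    (hJ : Function.Surjective J) (hJω : ∀ u v, ω (J u) (J v) = ω u v) (V : Submodule R M)
    (hV : (BilinForm.restrict (ω.compl₂ J) V).IsPerfPair)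
    (hLag : ∀ u, u ∈ V ↔ ∀ v ∈ V, ω u v = 0) :
    IsCompl V (V.map J) := by
  have hV_orth : BilinForm.orthogonal ω.flip V = V := Submodule.ext fun u ↦ (hLag u).symm
  have hJV_orth : BilinForm.orthogonal (ω.compl₂ J).flip V = V.map J := calc
    BilinForm.orthogonal (ω.compl₂ J).flip V
    _ = BilinForm.orthogonal ω.flip (V.map J) := by ext; simp
    _ = (BilinForm.orthogonal ω.flip V).map J :=
      orthogonal_map_of_surjective_of_isometry hJ (fun u v ↦ hJω v u) V
    _ = V.map J := by rw [hV_orth]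
  exact hJV_orth ▸ isCompl_orthogonal_of_isPerfPair_restrict hV.flip

end CommRing

/-- Let `E` be a finite-dimensional real vector space with a nondegenerate
alternating bilinear form `ω` and a compatible complex structure `J`
(`J² = −id`, `ω(Ju, Jv) = ω(u,v)`, and `ω(u, Ju) > 0` for `u ≠ 0`).
If `V` is a Lagrangian subspace (equal to its own `ω`-orthogonal complement),
then `V` and `J(V)` are complementary: `E = V ⊕ J(V)`. -/
theorem lagrangian_compl_J_image
    {E : Type*} [AddCommGroup E] [Module ℝ E] [FiniteDimensional ℝ E]
    (ω : E →ₗ[ℝ] E →ₗ[ℝ] ℝ)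
    (halt : ∀ u : E, ω u u = 0)
    (hnd : ∀ u : E, (∀ v : E, ω u v = 0) → u = 0)
    (J : E →ₗ[ℝ] E)
    (hJ2 : ∀ u : E, J (J u) = -u)
    (hJω : ∀ u v : E, ω (J u) (J v) = ω u v)
    (hpos : ∀ u : E, u ≠ 0 → 0 < ω u (J u))
    (V : Submodule ℝ E)
    (hLag : ∀ u : E, u ∈ V ↔ ∀ v ∈ V, ω u v = 0) :
    IsCompl V (V.map J) := by
  have hJ : Function.Surjective J := fun u ↦ ⟨-J u, by rw [map_neg, hJ2, neg_neg]⟩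
  have hV : (BilinForm.restrict (ω.compl₂ J) V).IsPerfPair := isPerfPair_of_anisotropic
    fun v hv ↦ by_contra fun hne ↦ (hpos v (Submodule.coe_eq_zero.not.2 hne)).ne' hv
  exact lagrangian_compl_J_image_general ω J hJ hJω V hV hLag
end
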